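/- Let n ≥ 5 be odd and let S be the Specht Z₂𝔖_n-lattice for (n−2,1,1) with basis {b(i₁,i₂) : 2 ≤ i₁ < i₂ ≤ n}. Then the set S₂ = { x ∈ S : all coefficients of x in this basis are congruent mod 2 } equals Z₂·(Σ_{2≤i₁<i₂≤n} b(i₁,i₂)) + 2S, is a Z₂𝔖_n-submodule of S containing 2S, and has Z₂-basis {Σ_{2≤j₁<j₂≤n} b(j₁,j₂)} ∪ {2·b(i₁,i₂) : (i₁,i₂) ≠ (n−1,n)}. -/

import Mathlib

open Finset

noncomputable section

/-- The `R`-linear map `⋀^k(f)` induced by `f`. -/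
def exteriorPowerMap {R M N : Type*} [CommRing R] [AddCommGroup M] [Module R M]
    [AddCommGroup N] [Module R N] (k : ℕ) (f : M →ₗ[R] N) : ⋀[R]^k M →ₗ[R] ⋀[R]^k N :=
  LinearMap.restrict (ExteriorAlgebra.map f).toLinearMap (p := ⋀[R]^k M) (q := ⋀[R]^k N)
    (fun x hx => by
      have h1 : Submodule.map (ExteriorAlgebra.map f).toLinearMap (⋀[R]^k M) ≤ ⋀[R]^k N := by
        rw [Submodule.map_pow]
        refine pow_le_pow_left' ?_ k
        rw [ExteriorAlgebra.ι_range_map_map]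
        exact LinearMap.map_le_range
      exact h1 (Submodule.mem_map_of_mem hx))

/-- The wedge `x ∧ y` in `⋀^2(M)`. -/
def wedgePair {R M : Type*} [CommRing R] [AddCommGroup M] [Module R M]
    (x y : M) : ⋀[R]^2 M :=
  ⟨ExteriorAlgebra.ιMulti R 2 ![x, y],
    ExteriorAlgebra.ιMulti_range R 2 (Set.mem_range_self _)⟩

variable (R : Type*) [CommRing R] (n : ℕ)

/-- The coefficient-sum functional on the natural permutation module. -/
def sumFunctional : (Fin n → R) →ₗ[R] R := ∑ i, LinearMap.proj i

/-- The natural Specht lattice `S^{(n-1,1)}`, realized as the kernel of the coefficient-sum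
functional on the natural permutation module. -/
def spechtW : Submodule R (Fin n → R) := LinearMap.ker (sumFunctional R n)

/-- The standard basis vector `e(1,i) = b_i − b_1` of the natural Specht lattice
(with `0`-based indices, index `0` playing the role of `1`). -/
def spechtE (h0 : 0 < n) (i : Fin n) : ↥(spechtW R n) :=
  ⟨Pi.single i 1 - Pi.single (⟨0, h0⟩ : Fin n) 1, by
    simp [spechtW, sumFunctional, LinearMap.mem_ker, Finset.sum_sub_distrib,
      Finset.sum_pi_single']⟩

/-- The action of `σ ∈ 𝔖_n` on the natural Specht lattice. -/
def spechtPerm (σ : Equiv.Perm (Fin n)) : ↥(spechtW R n) →ₗ[R] ↥(spechtW R n) :=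
  LinearMap.restrict (LinearMap.funLeft R R ⇑σ⁻¹)
    (fun x hx => by
      simp only [spechtW, LinearMap.mem_ker, sumFunctional, LinearMap.sum_apply,
        LinearMap.proj_apply, LinearMap.funLeft_apply] at hx ⊢
      rw [Equiv.sum_comp σ⁻¹ x]
      exact hx)

/-- The standard basis vector `b(i,j) = e(1,i) ∧ e(1,j)` of the Specht lattice
`S^{(n-2,1,1)} = ⋀²(S^{(n-1,1)})`. -/
def spechtBB (h0 : 0 < n) (i j : Fin n) : ⋀[R]^2 ↥(spechtW R n) :=
  wedgePair (spechtE R n h0 i) (spechtE R n h0 j)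

/-- The index set `{(i₁,i₂) : 2 ≤ i₁ < i₂ ≤ n}` of the standard basis of `S^{(n-2,1,1)}`
(`0`-based indices). -/
def PairIdx := {q : Fin n × Fin n // 0 < q.1.val ∧ q.1.val < q.2.val}

instance : Fintype (PairIdx n) := by unfold PairIdx; infer_instance
instance : DecidableEq (PairIdx n) := by unfold PairIdx; infer_instance

/-- The pair `(n-1, n)` (in `0`-based indices: `(n-2, n-1)`). -/
def pairMax (hn : 4 ≤ n) : PairIdx n :=
  ⟨(⟨n - 2, by omega⟩, ⟨n - 1, by omega⟩), ⟨show 0 < n - 2 by omega, show n - 2 < n - 1 by omega⟩⟩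

/-! The `2 × 2` minors `x ∧ y ↦ xᵢ yⱼ - xⱼ yᵢ`, taken over all `i ≠ j` and not only `0 < i < j`, are
permuted by `𝔖_n`. On `Σ b(i₁,i₂)` they equal `±1` when `i, j ≠ 0`; since the minors with fixed `j`
sum to zero, the one at `(0,j)` is congruent to `n - 2` modulo 2. So for odd `n` all minors of
`Σ b(i₁,i₂)` are odd, a property `𝔖_n` preserves, and `σ(Σ b(i₁,i₂)) ≡ Σ b(i₁,i₂)` modulo `2S`. -/

section

variable {R n}

section CongruentCoords

open Module

variable {M ι : Type*} [AddCommGroup M] [Module R M]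

/-- The submodule of vectors whose coordinates in the basis `b` are pairwise congruent modulo `a`.
For the standard basis of the Specht lattice and `a = 2` this is `S₂`. -/
def congruentCoords (b : Basis ι R M) (a : R) : Submodule R M where
  carrier := {x | ∀ i j, a ∣ b.repr x i - b.repr x j}
  zero_mem' i j := by simp
  add_mem' {x y} hx hy i j := by
    rw [map_add, Finsupp.add_apply, Finsupp.add_apply, add_sub_add_comm]
    exact dvd_add (hx i j) (hy i j)
  smul_mem' c x hx i j := by
    rw [map_smul, Finsupp.smul_apply, Finsupp.smul_apply, ← smul_sub]
    exact (hx i j).mul_left c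

theorem smul_mem_congruentCoords (b : Basis ι R M) (a : R) (x : M) :
    a • x ∈ congruentCoords b a := fun i j =>
  ⟨b.repr x i - b.repr x j, by simp [mul_sub]⟩

theorem ideal_span_smul_top_le_congruentCoords (b : Basis ι R M) (a : R) :
    Ideal.span {a} • (⊤ : Submodule R M) ≤ congruentCoords b a := by
  rw [Submodule.ideal_span_singleton_smul]
  rintro _ ⟨y, -, rfl⟩
  exact smul_mem_congruentCoords b a y

variable [Fintype ι]

theorem repr_sum_basis (b : Basis ι R M) (i : ι) : b.repr (∑ j, b j) i = 1 := by
  simp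

theorem eq_smul_sum_add_sum_repr_sub_smul (b : Basis ι R M) (c : R) (x : M) :
    x = c • ∑ i, b i + ∑ i, (b.repr x i - c) • b i := by
  simp only [sub_smul, sum_sub_distrib, b.sum_repr, smul_sum, add_sub_cancel]

theorem sum_basis_mem_congruentCoords (b : Basis ι R M) (a : R) :
    ∑ i, b i ∈ congruentCoords b a := fun i j => by
  rw [repr_sum_basis, repr_sum_basis, sub_self]
  exact dvd_zero a

theorem mem_congruentCoords_iff {b : Basis ι R M} {a : R} {x : M} :
    x ∈ congruentCoords b a ↔ ∃ (c : R) (y : M), x = c • ∑ i, b i + a • y := by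
  constructor
  · intro hx
    obtain _ | ⟨⟨i₀⟩⟩ := isEmpty_or_nonempty ι
    · exact ⟨0, 0, b.ext_elem isEmptyElim⟩
    choose d hd using fun i => hx i i₀
    refine ⟨b.repr x i₀, ∑ i, d i • b i, ?_⟩
    simpa only [hd, mul_smul, ← smul_sum] using
      eq_smul_sum_add_sum_repr_sub_smul b (b.repr x i₀) x
  · rintro ⟨c, y, rfl⟩
    exact add_mem (Submodule.smul_mem _ c (sum_basis_mem_congruentCoords b a))
      (smul_mem_congruentCoords b a y)

theorem coe_congruentCoords (b : Basis ι R M) (a : R) (i₀ : ι) :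
    (congruentCoords b a : Set M) =
      {x | ∃ α : ι → R, x = ∑ i, α i • b i ∧ ∀ i, ∃ c, α i = α i₀ + a * c} := by
  ext x
  constructor
  · intro hx
    refine ⟨b.repr x, (b.sum_repr x).symm, fun i => ?_⟩
    obtain ⟨c, hc⟩ := hx i i₀
    exact ⟨c, eq_add_of_sub_eq' hc⟩
  · rintro ⟨α, rfl, hα⟩ i j
    obtain ⟨c, hc⟩ := hα i
    obtain ⟨d, hd⟩ := hα j
    rw [b.repr_sum_self, hc, hd]
    exact ⟨c - d, by ring⟩

theorem congruentCoords_eq_span_sup (b : Basis ι R M) (a : R) :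
    congruentCoords b a =
      Submodule.span R {∑ i, b i} ⊔ Ideal.span {a} • (⊤ : Submodule R M) := by
  refine le_antisymm (fun x hx => ?_) (sup_le ?_ (ideal_span_smul_top_le_congruentCoords b a))
  · obtain ⟨c, y, rfl⟩ := mem_congruentCoords_iff.1 hx
    exact Submodule.add_mem_sup
      (Submodule.smul_mem _ c (Submodule.mem_span_singleton_self _))
      (Submodule.smul_mem_smul (Ideal.mem_span_singleton_self a) Submodule.mem_top)
  · rw [Submodule.span_singleton_le_iff_mem]
    exact sum_basis_mem_congruentCoords b a

theorem map_mem_congruentCoords {b : Basis ι R M} {a : R} {f : M →ₗ[R] M}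
    (hf : f (∑ i, b i) ∈ congruentCoords b a) {x : M} (hx : x ∈ congruentCoords b a) :
    f x ∈ congruentCoords b a := by
  obtain ⟨c, y, rfl⟩ := mem_congruentCoords_iff.1 hx
  rw [map_add, map_smul, map_smul]
  exact add_mem (Submodule.smul_mem _ c hf) (smul_mem_congruentCoords b a (f y))

variable [DecidableEq ι]

/-- The family obtained from `b` by replacing `b i₀` with the sum of the basis and multiplying all
other vectors by `a`: a basis of `congruentCoords b a` when `a` is not a zero divisor. -/
def congruentCoordsFamily (b : Basis ι R M) (a : R) (i₀ : ι) (i : ι) : M :=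
  if i = i₀ then ∑ j, b j else a • b i

theorem repr_congruentCoordsFamily_of_ne (b : Basis ι R M) (a : R) {i₀ i : ι} (hi : i ≠ i₀)
    (j : ι) : b.repr (congruentCoordsFamily b a i₀ i) j = if i = j then a else 0 := by
  simp [congruentCoordsFamily, hi, Finsupp.single_apply]

theorem linearIndependent_congruentCoordsFamily (b : Basis ι R M) {a : R}
    (ha : a ∈ nonZeroDivisors R) (i₀ : ι) :
    LinearIndependent R (congruentCoordsFamily b a i₀) := by
  rw [Fintype.linearIndependent_iff]
  intro g hg
  have coord_eq (j : ι) : ∑ i, g i * b.repr (congruentCoordsFamily b a i₀ i) j = 0 := by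
    simpa [Finsupp.finsetSum_apply] using congrArg (fun x => b.repr x j) hg
  have hg₀ : g i₀ = 0 := by
    have h := coord_eq i₀
    rw [Fintype.sum_eq_single i₀ fun i hi => by
      rw [repr_congruentCoordsFamily_of_ne b a hi, if_neg hi, mul_zero]] at h
    simpa [congruentCoordsFamily, -map_sum, repr_sum_basis] using h
  intro j
  by_cases hj : j = i₀
  · rw [hj, hg₀]
  have h := coord_eq j
  rw [Fintype.sum_eq_single j fun i hi => ?_, repr_congruentCoordsFamily_of_ne b a hj,
    if_pos rfl] at h
  · exact (mem_nonZeroDivisors_iff_right.1 ha) _ h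
  · by_cases hi₀ : i = i₀
    · rw [hi₀, hg₀, zero_mul]
    · rw [repr_congruentCoordsFamily_of_ne b a hi₀, if_neg hi, mul_zero]

theorem span_range_congruentCoordsFamily (b : Basis ι R M) (a : R) (i₀ : ι) :
    Submodule.span R (Set.range (congruentCoordsFamily b a i₀)) = congruentCoords b a := by
  apply le_antisymm
  · rw [Submodule.span_le]
    rintro _ ⟨i, rfl⟩
    unfold congruentCoordsFamily
    split_ifs
    · exact sum_basis_mem_congruentCoords b a
    · exact smul_mem_congruentCoords b a (b i)
  · intro x hx
    rw [eq_smul_sum_add_sum_repr_sub_smul b (b.repr x i₀) x]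
    refine add_mem (Submodule.smul_mem _ _ (Submodule.subset_span ⟨i₀, if_pos rfl⟩))
      (sum_mem fun i _ => ?_)
    by_cases hi : i = i₀
    · rw [hi, sub_self, zero_smul]
      exact zero_mem _
    · obtain ⟨c, hc⟩ := hx i i₀
      rw [hc, mul_comm, mul_smul]
      exact Submodule.smul_mem _ c (Submodule.subset_span ⟨i, if_neg hi⟩)

end CongruentCoords

section PluckerCoord

theorem exteriorPowerMap_eq_map {M N : Type*} [AddCommGroup M] [Module R M] [AddCommGroup N]
    [Module R N] (k : ℕ) (f : M →ₗ[R] N) : exteriorPowerMap k f = exteriorPower.map k f := by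
  ext v
  simp [exteriorPowerMap, ExteriorAlgebra.map_apply_ιMulti, Function.comp_def]

theorem sum_coe_spechtW (x : spechtW R n) : ∑ i, x.1 i = 0 := by
  simpa [spechtW, sumFunctional] using x.2

/-- The Plücker coordinate `x ∧ y ↦ xᵢ yⱼ - xⱼ yᵢ` on `⋀²(S^{(n-1,1)})`. For `0 < i < j` it is the
coordinate at `b(i,j)`; the remaining ones make the action of `𝔖_n` a permutation of indices. -/
def pluckerCoord (i j : Fin n) : Module.Dual R (⋀[R]^2 (spechtW R n)) :=
  exteriorPower.pairingDual R (spechtW R n) 2 (exteriorPower.ιMulti R 2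
    ![LinearMap.proj i ∘ₗ (spechtW R n).subtype, LinearMap.proj j ∘ₗ (spechtW R n).subtype])

theorem pluckerCoord_ιMulti (i j : Fin n) (v : Fin 2 → spechtW R n) :
    pluckerCoord i j (exteriorPower.ιMulti R 2 v) =
      (v 0).1 i * (v 1).1 j - (v 0).1 j * (v 1).1 i := by
  simp [pluckerCoord, exteriorPower.pairingDual_ιMulti_ιMulti, Matrix.det_fin_two]

theorem pluckerCoord_swap (i j : Fin n) :
    (pluckerCoord i j : Module.Dual R _) = -pluckerCoord j i := by
  ext v
  simp [pluckerCoord_ιMulti]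

theorem pluckerCoord_self (i : Fin n) : (pluckerCoord i i : Module.Dual R _) = 0 := by
  ext v
  simp [pluckerCoord_ιMulti]

theorem sum_pluckerCoord (j : Fin n) : ∑ i, (pluckerCoord i j : Module.Dual R _) = 0 := by
  ext v
  simp [pluckerCoord_ιMulti, ← Finset.sum_mul, ← Finset.mul_sum, sum_coe_spechtW]

theorem pluckerCoord_exteriorPowerMap_spechtPerm (σ : Equiv.Perm (Fin n)) (i j : Fin n)
    (x : ⋀[R]^2 (spechtW R n)) :
    pluckerCoord i j (exteriorPowerMap 2 (spechtPerm R n σ) x) =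
      pluckerCoord (σ⁻¹ i) (σ⁻¹ j) x := by
  suffices pluckerCoord i j ∘ₗ exteriorPower.map 2 (spechtPerm R n σ) =
      pluckerCoord (σ⁻¹ i) (σ⁻¹ j) by
    rw [exteriorPowerMap_eq_map]
    exact LinearMap.congr_fun this x
  ext v
  simp [pluckerCoord_ιMulti, spechtPerm]

end PluckerCoord

section SpechtBasis

theorem spechtE_apply_of_pos (h0 : 0 < n) (i : Fin n) {j : Fin n} (hj : 0 < j.val) :
    (spechtE R n h0 i).1 j = if j = i then 1 else 0 := by
  have hj0 : j ≠ ⟨0, h0⟩ := fun h => hj.ne' (congrArg Fin.val h)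
  simp [spechtE, Pi.single_apply, hj0]

theorem pluckerCoord_spechtBB (h0 : 0 < n) {i j k l : Fin n} (hi : 0 < i.val) (hij : i < j)
    (hkl : k < l) : pluckerCoord i j (spechtBB R n h0 k l) = if i = k ∧ j = l then 1 else 0 := by
  have hj : 0 < j.val := hi.trans hij
  have not_swapped : ¬(j = k ∧ i = l) := by omega
  have minor_eq : pluckerCoord i j (spechtBB R n h0 k l) =
      (spechtE R n h0 k).1 i * (spechtE R n h0 l).1 j -
        (spechtE R n h0 k).1 j * (spechtE R n h0 l).1 i :=
    pluckerCoord_ιMulti i j ![spechtE R n h0 k, spechtE R n h0 l]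
  simp only [minor_eq, spechtE_apply_of_pos h0 _ hi, spechtE_apply_of_pos h0 _ hj,
    ite_zero_mul_ite_zero, mul_one, if_neg not_swapped, sub_zero]

theorem pluckerCoord_spechtBB_pairIdx (h0 : 0 < n) (q r : PairIdx n) :
    pluckerCoord q.1.1 q.1.2 (spechtBB R n h0 r.1.1 r.1.2) = if q = r then 1 else 0 :=
  (pluckerCoord_spechtBB h0 q.2.1 q.2.2 r.2.2).trans
    (if_congr (Prod.ext_iff.symm.trans Subtype.ext_iff.symm) rfl rfl)

theorem spechtE_zero (h0 : 0 < n) : spechtE R n h0 ⟨0, h0⟩ = 0 :=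
  Subtype.ext (sub_self _)

theorem span_range_spechtE (h0 : 0 < n) :
    Submodule.span R (Set.range (spechtE R n h0)) = ⊤ := by
  refine eq_top_iff.2 fun x _ => ?_
  have expansion : ∑ i, x.1 i • spechtE R n h0 i = x := by
    ext j
    simp [spechtE, Finset.sum_apply, mul_sub, Finset.sum_sub_distrib, Pi.single_apply,
      sum_coe_spechtW]
  exact (Submodule.mem_span_range_iff_exists_fun R).2 ⟨x.1, expansion⟩

theorem linearIndependent_spechtBB (h0 : 0 < n) :
    LinearIndependent R fun q : PairIdx n => spechtBB R n h0 q.1.1 q.1.2 :=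
  .of_pairwise_dual_eq_zero_one _ (fun q => pluckerCoord q.1.1 q.1.2)
    (fun q r hqr => (pluckerCoord_spechtBB_pairIdx h0 q r).trans (if_neg hqr))
    (fun q => (pluckerCoord_spechtBB_pairIdx h0 q q).trans (if_pos rfl))

theorem span_range_spechtBB (h0 : 0 < n) :
    Submodule.span R (Set.range fun q : PairIdx n => spechtBB R n h0 q.1.1 q.1.2) = ⊤ := by
  rw [eq_top_iff, ← exteriorPower.ιMulti_family_span_of_span R (span_range_spechtE h0),
    Submodule.span_le]
  rintro _ ⟨s, rfl⟩
  set e := Set.powersetCard.ofFinEmbEquiv.symm s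
  have family_eq : exteriorPower.ιMulti_family R 2 (spechtE R n h0) s =
      spechtBB R n h0 (e 0) (e 1) := by
    refine congrArg (exteriorPower.ιMulti R 2) (funext fun k => ?_)
    fin_cases k <;> rfl
  have he : e 0 < e 1 := e.strictMono Fin.zero_lt_one
  rw [family_eq]
  by_cases h : 0 < (e 0).val
  · exact Submodule.subset_span ⟨⟨(e 0, e 1), h, he⟩, rfl⟩
  · have e_zero : e 0 = ⟨0, h0⟩ := Fin.ext (Nat.eq_zero_of_not_pos h)
    have family_eq_zero : spechtBB R n h0 (e 0) (e 1) = 0 :=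
      (exteriorPower.ιMulti R 2).map_coord_zero 0 (by simp [e_zero, spechtE_zero])
    rw [family_eq_zero]
    exact zero_mem _

/-- The standard basis `{b(i₁,i₂) : 2 ≤ i₁ < i₂ ≤ n}` of `S^{(n-2,1,1)}`, with `0`-based
indices. -/
def spechtBasis (R : Type*) [CommRing R] (h0 : 0 < n) :
    Module.Basis (PairIdx n) R (⋀[R]^2 (spechtW R n)) :=
  .mk (linearIndependent_spechtBB h0) (span_range_spechtBB h0).ge

theorem spechtBasis_apply (h0 : 0 < n) (q : PairIdx n) :
    spechtBasis R h0 q = spechtBB R n h0 q.1.1 q.1.2 :=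
  Module.Basis.mk_apply _ _ q

theorem spechtBasis_repr (h0 : 0 < n) (x : ⋀[R]^2 (spechtW R n)) (q : PairIdx n) :
    (spechtBasis R h0).repr x q = pluckerCoord q.1.1 q.1.2 x := by
  suffices (spechtBasis R h0).coord q = pluckerCoord q.1.1 q.1.2 from LinearMap.congr_fun this x
  refine (spechtBasis R h0).ext fun r => ?_
  rw [Module.Basis.coord_apply, Module.Basis.repr_self, Finsupp.single_apply, spechtBasis_apply,
    pluckerCoord_spechtBB_pairIdx]
  simp only [eq_comm]

end SpechtBasis

section Parity

theorem two_dvd_sub_one_of_sum_eq_zero {ι : Type*} [Fintype ι] (hodd : Odd (Fintype.card ι))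
    {a : ι → R} (ha : ∑ i, a i = 0) {k l : ι} (hkl : k ≠ l) (hl : a l = 0)
    (h : ∀ i, i ≠ k → i ≠ l → 2 ∣ a i - 1) : 2 ∣ a k - 1 := by
  classical
  have sum_rest : 2 ∣ ∑ i ∈ (univ.erase k).erase l, (a i - 1) :=
    dvd_sum fun i hi => h i (by grind) (by grind)
  have sum_all : ∑ i, (a i - 1) = -(Fintype.card ι : R) := by simp [ha]
  rw [← add_sum_erase _ _ (mem_univ k),
    ← add_sum_erase _ _ (mem_erase.2 ⟨hkl.symm, mem_univ l⟩), hl] at sum_all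
  obtain ⟨c, hc⟩ := sum_rest
  obtain ⟨m, hm⟩ := hodd
  rw [hc, hm] at sum_all
  push_cast at sum_all
  exact ⟨-m - c, by linear_combination sum_all⟩

theorem two_dvd_pluckerCoord_sub_one_swap {i j : Fin n} {x : ⋀[R]^2 (spechtW R n)}
    (h : 2 ∣ pluckerCoord i j x - 1) : 2 ∣ pluckerCoord j i x - 1 := by
  obtain ⟨c, hc⟩ := h
  rw [pluckerCoord_swap, LinearMap.neg_apply]
  exact ⟨-c - 1, by linear_combination -hc⟩

theorem two_dvd_pluckerCoord_sum_spechtBasis_sub_one_of_pos (h0 : 0 < n) {i j : Fin n}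
    (hi : 0 < i.val) (hj : 0 < j.val) (hij : i ≠ j) :
    2 ∣ pluckerCoord i j (∑ q, spechtBasis R h0 q) - 1 := by
  wlog hlt : i < j generalizing i j
  · exact two_dvd_pluckerCoord_sub_one_swap
      (this hj hi hij.symm (lt_of_le_of_ne (not_lt.1 hlt) hij.symm))
  have coord_eq_one : pluckerCoord i j (∑ q, spechtBasis R h0 q) = 1 :=
    (spechtBasis_repr h0 _ ⟨(i, j), hi, hlt⟩).symm.trans (repr_sum_basis _ _)
  rw [coord_eq_one, sub_self]
  exact dvd_zero 2

theorem two_dvd_pluckerCoord_sum_spechtBasis_sub_one (hodd : Odd n) {i j : Fin n} (hij : i ≠ j) :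
    2 ∣ pluckerCoord i j (∑ q, spechtBasis R hodd.pos q) - 1 := by
  wlog hj : 0 < j.val generalizing i j
  · exact two_dvd_pluckerCoord_sub_one_swap (this hij.symm (by omega))
  by_cases hi : 0 < i.val
  · exact two_dvd_pluckerCoord_sum_spechtBasis_sub_one_of_pos hodd.pos hi hj hij
  refine two_dvd_sub_one_of_sum_eq_zero (by rwa [Fintype.card_fin])
    (a := fun k => pluckerCoord k j (∑ q, spechtBasis R hodd.pos q)) ?_ hij ?_ fun k hki hkj => ?_
  · rw [← LinearMap.sum_apply, sum_pluckerCoord, LinearMap.zero_apply]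
  · rw [pluckerCoord_self, LinearMap.zero_apply]
  · exact two_dvd_pluckerCoord_sum_spechtBasis_sub_one_of_pos hodd.pos (by omega) hj hkj

theorem exteriorPowerMap_spechtPerm_mem_congruentCoords (hodd : Odd n) (σ : Equiv.Perm (Fin n))
    {x : ⋀[R]^2 (spechtW R n)} (hx : x ∈ congruentCoords (spechtBasis R hodd.pos) 2) :
    exteriorPowerMap 2 (spechtPerm R n σ) x ∈ congruentCoords (spechtBasis R hodd.pos) 2 := by
  refine map_mem_congruentCoords (fun q r => ?_) hx
  have two_dvd (q : PairIdx n) : 2 ∣ (spechtBasis R hodd.pos).repr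
      (exteriorPowerMap 2 (spechtPerm R n σ) (∑ q, spechtBasis R hodd.pos q)) q - 1 := by
    rw [spechtBasis_repr, pluckerCoord_exteriorPowerMap_spechtPerm]
    exact two_dvd_pluckerCoord_sum_spechtBasis_sub_one hodd
      (σ⁻¹.injective.ne (Fin.ne_of_lt q.2.2))
  simpa using dvd_sub (two_dvd q) (two_dvd r)

end Parity

end

theorem specht_sublattice_S2_general (R : Type*) [CommRing R] (h2 : (2 : R) ∈ nonZeroDivisors R)
    (n : ℕ) (hodd : Odd n) (q₀ : PairIdx n) :
    ∃ S₂ : Submodule R (⋀[R]^2 ↥(spechtW R n)),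
      (S₂ : Set (⋀[R]^2 ↥(spechtW R n))) =
        {x | ∃ α : PairIdx n → R,
          x = ∑ q : PairIdx n, α q • spechtBB R n hodd.pos q.1.1 q.1.2 ∧
          ∀ q : PairIdx n, ∃ c : R, α q = α q₀ + 2 * c} ∧
      S₂ = Submodule.span R {∑ q : PairIdx n, spechtBB R n hodd.pos q.1.1 q.1.2}
          ⊔ Ideal.span {(2 : R)} • (⊤ : Submodule R (⋀[R]^2 ↥(spechtW R n))) ∧
      Ideal.span {(2 : R)} • (⊤ : Submodule R (⋀[R]^2 ↥(spechtW R n))) ≤ S₂ ∧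
      (∀ (σ : Equiv.Perm (Fin n)), ∀ x ∈ S₂, exteriorPowerMap 2 (spechtPerm R n σ) x ∈ S₂) ∧
      LinearIndependent R (fun q : PairIdx n =>
        if q = q₀ then ∑ r : PairIdx n, spechtBB R n hodd.pos r.1.1 r.1.2
        else (2 : R) • spechtBB R n hodd.pos q.1.1 q.1.2) ∧
      Submodule.span R (Set.range (fun q : PairIdx n =>
        if q = q₀ then ∑ r : PairIdx n, spechtBB R n hodd.pos r.1.1 r.1.2
        else (2 : R) • spechtBB R n hodd.pos q.1.1 q.1.2)) = S₂ := by
  set b := spechtBasis R hodd.pos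
  simp only [← spechtBasis_apply]
  exact ⟨congruentCoords b 2, coe_congruentCoords b 2 q₀, congruentCoords_eq_span_sup b 2,
    ideal_span_smul_top_le_congruentCoords b 2,
    fun σ _ hx => exteriorPowerMap_spechtPerm_mem_congruentCoords hodd σ hx,
    linearIndependent_congruentCoordsFamily b h2 q₀, span_range_congruentCoordsFamily b 2 q₀⟩

set_option synthInstance.maxHeartbeats 1000000 in
set_option maxHeartbeats 1000000 in
/-- Let `n ≥ 5` be odd and let `S = S^{(n-2,1,1)}_{ℤ₂} = ⋀²(S^{(n-1,1)}_{ℤ₂})` be the Specht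
`ℤ₂𝔖_n`-lattice with standard basis `{b(i₁,i₂) : 2 ≤ i₁ < i₂ ≤ n}`.  Then the set
`S₂ = {Σ α(i₁,i₂)·b(i₁,i₂) : α(i₁,i₂) ≡ α(n−1,n) mod 2 for all (i₁,i₂)}` equals
`ℤ₂·(Σ b(i₁,i₂)) + 2S`, is a `ℤ₂𝔖_n`-submodule of `S` containing `2S`, and has `ℤ₂`-basis
`{Σ b(j₁,j₂)} ∪ {2·b(i₁,i₂) : (i₁,i₂) ≠ (n−1,n)}`. -/
theorem specht_sublattice_S2 (n : ℕ) (hn : 5 ≤ n) (hodd : Odd n) :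
    ∃ S₂ : Submodule ℤ_[2] (⋀[ℤ_[2]]^2 ↥(spechtW ℤ_[2] n)),
      (S₂ : Set (⋀[ℤ_[2]]^2 ↥(spechtW ℤ_[2] n))) =
        {x | ∃ α : PairIdx n → ℤ_[2],
          x = ∑ q : PairIdx n, α q • spechtBB ℤ_[2] n (by omega) q.1.1 q.1.2 ∧
          ∀ q : PairIdx n, ∃ c : ℤ_[2], α q = α (pairMax n (by omega)) + 2 * c} ∧
      S₂ = Submodule.span ℤ_[2]
            {∑ q : PairIdx n, spechtBB ℤ_[2] n (by omega) q.1.1 q.1.2}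
          ⊔ Ideal.span {(2 : ℤ_[2])} • (⊤ : Submodule ℤ_[2] (⋀[ℤ_[2]]^2 ↥(spechtW ℤ_[2] n))) ∧
      Ideal.span {(2 : ℤ_[2])} • (⊤ : Submodule ℤ_[2] (⋀[ℤ_[2]]^2 ↥(spechtW ℤ_[2] n))) ≤ S₂ ∧
      (∀ (σ : Equiv.Perm (Fin n)), ∀ x ∈ S₂,
        exteriorPowerMap 2 (spechtPerm ℤ_[2] n σ) x ∈ S₂) ∧
      LinearIndependent ℤ_[2] (fun q : PairIdx n =>
        if q = pairMax n (by omega) then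
          ∑ r : PairIdx n, spechtBB ℤ_[2] n (by omega) r.1.1 r.1.2
        else (2 : ℤ_[2]) • spechtBB ℤ_[2] n (by omega) q.1.1 q.1.2) ∧
      Submodule.span ℤ_[2] (Set.range (fun q : PairIdx n =>
        if q = pairMax n (by omega) then
          ∑ r : PairIdx n, spechtBB ℤ_[2] n (by omega) r.1.1 r.1.2
        else (2 : ℤ_[2]) • spechtBB ℤ_[2] n (by omega) q.1.1 q.1.2)) = S₂ := by
  exact specht_sublattice_S2_general ℤ_[2] (mem_nonZeroDivisors_of_ne_zero two_ne_zero) n hodd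
    (pairMax n (by omega))

end
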